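/- Let Q⁰, Q, P, H ∈ ℝ^{d_x×d_x} and R⁰, R ∈ ℝ^{d_u×d_u} be symmetric matrices, and let x⁰, x¹, …, xⁿ ∈ ℝ^{d_x}, u⁰, u¹, …, uⁿ ∈ ℝ^{d_u}, with x̄ = (1/n)∑_{i=1}^n xⁱ, ū = (1/n)∑_{i=1}^n uⁱ, x̆ⁱ = xⁱ − x̄, ŭⁱ = uⁱ − ū. Then the per-stage cost decomposes exactly as: (x⁰)ᵀQ⁰x⁰ + (u⁰)ᵀR⁰u⁰ + (1/n)∑_{i=1}^n ((xⁱ)ᵀQxⁱ + (xⁱ − x⁰)ᵀP(xⁱ − x⁰) + (uⁱ)ᵀRuⁱ) + (1/(2n²))∑_{i=1}^n∑_{j=1}^n (xⁱ − xʲ)ᵀH(xⁱ − xʲ) = [x⁰; x̄]ᵀQ̄[x⁰; x̄] + [u⁰; ū]ᵀR̄[u⁰; ū] + (1/n)∑_{i=1}^n ((x̆ⁱ)ᵀ(Q + P + H)x̆ⁱ + (ŭⁱ)ᵀRŭⁱ), where Q̄ = [[Q⁰ + P, −P],[−P, Q + P]] and R̄ = blockdiag(R⁰, R). -/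

import Mathlib

/-!
Every cost term is a quadratic form `v ⬝ᵥ (M *ᵥ v)`, so the identity rests on the
variance decomposition: expanding `∑ᵢ (vⁱ - c)ᵀM(vⁱ - c)` bilinearly and using `∑ᵢ vⁱ = n m`
expresses it through `∑ᵢ (vⁱ)ᵀMvⁱ`, the mean `m` and `c` (`sum_quadForm_sub`). Taking `c = m`
handles the deviation terms, `c = x⁰` the tracking cost, and summing over `c = vʲ` the pairwise
cost (`sum_sum_quadForm_sub`). Both sides then become the same combination of `∑ᵢ (vⁱ)ᵀMvⁱ` and
bilinear terms in `x⁰`, `x̄`, `u⁰`, `ū`.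
-/

open Matrix Finset

/-- Expansion of a quadratic form about an arbitrary centre `c`, for points with mean `m`. -/
lemma sum_quadForm_sub {d n : ℕ} (M : Matrix (Fin d) (Fin d) ℝ) (v : Fin n → Fin d → ℝ)
    (m c : Fin d → ℝ) (hm : ∑ i, v i = (n : ℝ) • m) :
    ∑ i, (v i - c) ⬝ᵥ (M *ᵥ (v i - c))
      = ∑ i, v i ⬝ᵥ (M *ᵥ v i) - n * (m ⬝ᵥ (M *ᵥ c)) - n * (c ⬝ᵥ (M *ᵥ m))
        + n * (c ⬝ᵥ (M *ᵥ c)) := by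
  have h1 : ∑ i, v i ⬝ᵥ (M *ᵥ c) = n * (m ⬝ᵥ (M *ᵥ c)) := by
    rw [← sum_dotProduct, hm, smul_dotProduct, smul_eq_mul]
  have h2 : ∑ i, c ⬝ᵥ (M *ᵥ v i) = n * (c ⬝ᵥ (M *ᵥ m)) := by
    rw [← dotProduct_sum, ← mulVec_sum, hm, mulVec_smul, dotProduct_smul, smul_eq_mul]
  simp only [mulVec_sub, sub_dotProduct, dotProduct_sub, sum_sub_distrib, h1, h2, sum_const,
    card_univ, Fintype.card_fin, nsmul_eq_mul]
  ring

/-- The sum of a quadratic form over all pairwise differences is `2n²` times its variance. -/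
lemma sum_sum_quadForm_sub {d n : ℕ} (M : Matrix (Fin d) (Fin d) ℝ) (v : Fin n → Fin d → ℝ)
    (m : Fin d → ℝ) (hm : ∑ i, v i = (n : ℝ) • m) :
    ∑ i, ∑ j, (v i - v j) ⬝ᵥ (M *ᵥ (v i - v j))
      = 2 * n * ∑ i, v i ⬝ᵥ (M *ᵥ v i) - 2 * (n : ℝ) ^ 2 * (m ⬝ᵥ (M *ᵥ m)) := by
  have h1 : ∑ i, v i ⬝ᵥ (M *ᵥ m) = n * (m ⬝ᵥ (M *ᵥ m)) := by
    rw [← sum_dotProduct, hm, smul_dotProduct, smul_eq_mul]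
  have h2 : ∑ i, m ⬝ᵥ (M *ᵥ v i) = n * (m ⬝ᵥ (M *ᵥ m)) := by
    rw [← dotProduct_sum, ← mulVec_sum, hm, mulVec_smul, dotProduct_smul, smul_eq_mul]
  rw [sum_comm]
  simp only [sum_quadForm_sub M v m _ hm, sum_add_distrib, sum_sub_distrib, ← mul_sum, h1, h2,
    sum_const, card_univ, Fintype.card_fin, nsmul_eq_mul]
  ring

/-- exact per-stage cost decomposition.  With `x̄, ū` the mean-fields,
`x̆ⁱ = xⁱ − x̄`, `ŭⁱ = uⁱ − ū`, `Q̄ = [[Q⁰+P, −P],[−P, Q+P]]` and `R̄ = blockdiag(R⁰, R)`: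
the leader-follower per-stage cost equals
`[x⁰; x̄]ᵀQ̄[x⁰; x̄] + [u⁰; ū]ᵀR̄[u⁰; ū] + (1/n)∑ᵢ((x̆ⁱ)ᵀ(Q+P+H)x̆ⁱ + (ŭⁱ)ᵀRŭⁱ)`. -/
theorem per_stage_cost_decomposition
    (dx du n : ℕ) (hn : 0 < n)
    (Q0 Q P H : Matrix (Fin dx) (Fin dx) ℝ) (R0 R : Matrix (Fin du) (Fin du) ℝ)
    (hQ0 : Q0.IsSymm) (hQ : Q.IsSymm) (hP : P.IsSymm) (hH : H.IsSymm)
    (hR0 : R0.IsSymm) (hR : R.IsSymm)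
    (x0 : Fin dx → ℝ) (u0 : Fin du → ℝ)
    (x : Fin n → Fin dx → ℝ) (u : Fin n → Fin du → ℝ) :
    x0 ⬝ᵥ (Q0 *ᵥ x0) + u0 ⬝ᵥ (R0 *ᵥ u0)
      + (1 / (n : ℝ)) *
          ∑ i : Fin n,
            (x i ⬝ᵥ (Q *ᵥ x i) + (x i - x0) ⬝ᵥ (P *ᵥ (x i - x0)) + u i ⬝ᵥ (R *ᵥ u i))
      + (1 / (2 * (n : ℝ) ^ 2)) *
          ∑ i : Fin n, ∑ j : Fin n, (x i - x j) ⬝ᵥ (H *ᵥ (x i - x j))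
    = Sum.elim x0 ((1 / (n : ℝ)) • ∑ k : Fin n, x k) ⬝ᵥ
        (fromBlocks (Q0 + P) (-P) (-P) (Q + P) *ᵥ
          Sum.elim x0 ((1 / (n : ℝ)) • ∑ k : Fin n, x k))
      + Sum.elim u0 ((1 / (n : ℝ)) • ∑ k : Fin n, u k) ⬝ᵥ
          (fromBlocks R0 0 0 R *ᵥ
            Sum.elim u0 ((1 / (n : ℝ)) • ∑ k : Fin n, u k))
      + (1 / (n : ℝ)) *
          ∑ i : Fin n,
            ((x i - (1 / (n : ℝ)) • ∑ k : Fin n, x k) ⬝ᵥ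
                ((Q + P + H) *ᵥ (x i - (1 / (n : ℝ)) • ∑ k : Fin n, x k))
              + (u i - (1 / (n : ℝ)) • ∑ k : Fin n, u k) ⬝ᵥ
                  (R *ᵥ (u i - (1 / (n : ℝ)) • ∑ k : Fin n, u k))) := by
  have hn' : (n : ℝ) ≠ 0 := by exact_mod_cast hn.ne'
  have hx : ∑ k, x k = (n : ℝ) • ((1 / (n : ℝ)) • ∑ k, x k) := by
    rw [smul_smul, mul_one_div_cancel hn', one_smul]
  have hu : ∑ k, u k = (n : ℝ) • ((1 / (n : ℝ)) • ∑ k, u k) := by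
    rw [smul_smul, mul_one_div_cancel hn', one_smul]
  generalize (1 / (n : ℝ)) • ∑ k, x k = m at hx ⊢
  generalize (1 / (n : ℝ)) • ∑ k, u k = w at hu ⊢
  rw [sum_sum_quadForm_sub H x m hx]
  simp only [sum_add_distrib, sum_quadForm_sub _ x m _ hx, sum_quadForm_sub _ u w _ hu,
    fromBlocks_mulVec, Sum.elim_comp_inl, Sum.elim_comp_inr, sumElim_dotProduct_sumElim,
    add_mulVec, neg_mulVec, zero_mulVec, dotProduct_add, dotProduct_neg, add_zero, zero_add]
  field_simp
  ring
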